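/- Let X be a real Banach space that is ρ-convex and σ-smooth, and let 1 < p < ∞ with conjugate exponent p* (1/p + 1/p* = 1) satisfy σ ≤ p ≤ ρ and σ ≤ p* ≤ ρ. Let M, N be closed linear subspaces of X whose sum M + N is closed and such that for every bounded subset S ⊆ X there is κ ≥ 1 with min{dist(x,M)^p, dist(x,N)^p} ≤ ((κ−1)/κ)‖x‖^p + (1/κ) dist(x, M+N)^p for all x ∈ S. Then for every x ∈ X, the sequence defined by x₀ = x, x_{2n+1} = (I − P_M)x_{2n}, x_{2n} = (I − P_N)x_{2n−1} converges to (I − P_{M+N})x, and there exist constants C > 0 and q ∈ (0,1) such that ‖(I − P_{M+N})x − x_n‖ ≤ C q^n for all n; that is, the convergence is linear. -/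

import Mathlib

open Filter Topology

noncomputable section

/-- The modulus of convexity of a normed space `X`. -/
def modConvex (X : Type*) [NormedAddCommGroup X] (ε : ℝ) : ℝ :=
  sInf {d : ℝ | ∃ x y : X, ‖x‖ = 1 ∧ ‖y‖ = 1 ∧ ε ≤ ‖x - y‖ ∧ d = 1 - ‖x + y‖ / 2}

/-- The modulus of smoothness of a normed space `X`. -/
def modSmooth (X : Type*) [NormedAddCommGroup X] [NormedSpace ℝ X] (τ : ℝ) : ℝ :=
  sSup {d : ℝ | ∃ x y : X, ‖x‖ = 1 ∧ ‖y‖ = 1 ∧ d = (‖x + τ • y‖ + ‖x - τ • y‖) / 2 - 1}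

/-- `X` is uniformly convex: the modulus of convexity is positive for positive ε. -/
def UnifConvex (X : Type*) [NormedAddCommGroup X] : Prop :=
  ∀ ε : ℝ, 0 < ε → ε ≤ 2 → 0 < modConvex X ε

/-- `X` is uniformly smooth: `ρ_X(τ)/τ → 0` as `τ → 0⁺`. -/
def UnifSmooth (X : Type*) [NormedAddCommGroup X] [NormedSpace ℝ X] : Prop :=
  Tendsto (fun τ => modSmooth X τ / τ) (𝓝[>] (0 : ℝ)) (𝓝 0)

/-- `X` is uniformly convex of power type `ρ`. -/
def PowerConvex (X : Type*) [NormedAddCommGroup X] (ρ : ℝ) : Prop :=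
  ∃ c > (0 : ℝ), ∀ ε ∈ Set.Icc (0 : ℝ) 2, c * ε ^ ρ ≤ modConvex X ε

/-- `X` is uniformly smooth of power type `σ` (with `σ > 1`). -/
def PowerSmooth (X : Type*) [NormedAddCommGroup X] [NormedSpace ℝ X] (σ : ℝ) : Prop :=
  1 < σ ∧ ∃ C > (0 : ℝ), ∀ τ ∈ Set.Icc (0 : ℝ) 1, modSmooth X τ ≤ C * τ ^ σ

variable {X : Type*} [NormedAddCommGroup X] [NormedSpace ℝ X]

/-- The duality mapping `j_p`, the Fréchet derivative of `x ↦ (1/p)‖x‖^p`. -/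
def dualityMap (p : ℝ) (x : X) : X →L[ℝ] ℝ :=
  fderiv ℝ (fun y : X => 1 / p * ‖y‖ ^ p) x

/-- The Bregman distance `D_p(x, y)`. -/
def bregmanDist (p : ℝ) (x y : X) : ℝ :=
  1 / p * ‖x‖ ^ p - 1 / p * ‖y‖ ^ p - dualityMap p y (x - y)

/-- The Bregman projection of `x` onto the set `S`: the minimizer of `m ↦ D_p(m, x)` over `S`. -/
def bregmanProj (p : ℝ) (S : Set X) (x : X) : X :=
  letI : Nonempty X := ⟨x⟩
  Classical.epsilon fun y => y ∈ S ∧ ∀ m ∈ S, bregmanDist p y x ≤ bregmanDist p m x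

/-- The Bregman distance `D_p(S, x)` from the point `x` to the set `S`. -/
def bregmanDistSet (p : ℝ) (S : Set X) (x : X) : ℝ :=
  bregmanDist p (bregmanProj p S x) x

/-- The metric projection of `x` onto the set `S`: the point of `S` nearest to `x`. -/
def metricProj (S : Set X) (x : X) : X :=
  letI : Nonempty X := ⟨x⟩
  Classical.epsilon fun y => y ∈ S ∧ ∀ m ∈ S, ‖x - y‖ ≤ ‖x - m‖

/-!
The convexity estimate behind the proof is homogeneous: for `u`, `v` in the ball of radius `r`,
`ρ`-convexity gives `‖u - v‖ ^ ρ ≤ C * r ^ (ρ - 1) * (r - ‖u + v‖ / 2)`. Midpoints of points of a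
convex set `S` stay in `S`, so two points of `S` within `r` of `x` are at distance controlled by
`r - dist(x, S)`. For a minimizing sequence this gives the Cauchy property, hence nearest points.

All iterates lie in the coset `x₀ + (M + N)`, so they have the same distance `d` from `M + N`.
Since `x (n + 1)` is already a residual from one of `M`, `N`, the minimum of its two distances is
`‖x (n + 2)‖`, and the hypothesis on `M` and `N` says precisely that the excess `‖x n‖ ^ p - d ^ p`
contracts by the factor `(κ - 1) / κ`. The convexity estimate at `x₀`, applied to `P_{M+N} x₀` and
`x₀ - x n`, turns geometric decay of the excess into geometric decay of the error.
-/

lemma rpow_sub_one_mul_sub_le {p ρ d r R : ℝ} (hp : 1 ≤ p) (hpρ : p ≤ ρ) (hd : 0 ≤ d)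
    (hdr : d ≤ r) (hrR : r ≤ R) :
    r ^ (ρ - 1) * (r - d) ≤ R ^ (ρ - p) * (r ^ p - d ^ p) := by
  have hr : 0 ≤ r := hd.trans hdr
  have rpow_eq (t : ℝ) (ht : 0 ≤ t) : t ^ p = t ^ (p - 1) * t := by
    rw [← Real.rpow_add_one' ht (by linarith), sub_add_cancel]
  have tangent : r ^ (p - 1) * (r - d) ≤ r ^ p - d ^ p := by
    rw [rpow_eq r hr, rpow_eq d hd, mul_sub]
    gcongr
  calc r ^ (ρ - 1) * (r - d) = r ^ (ρ - p) * (r ^ (p - 1) * (r - d)) := by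
        rw [← mul_assoc, ← Real.rpow_add_of_nonneg hr (by linarith) (by linarith),
          sub_add_sub_cancel]
    _ ≤ R ^ (ρ - p) * (r ^ p - d ^ p) := by
        refine mul_le_mul (by gcongr) tangent ?_ (Real.rpow_nonneg (hr.trans hrR) _)
        exact mul_nonneg (Real.rpow_nonneg hr _) (sub_nonneg.2 hdr)

lemma le_div_mul_pow_of_antitone {e : ℕ → ℝ} {θ : ℝ} (hθ₀ : 0 < θ) (hθ₁ : θ ≤ 1)
    (he : Antitone e) (he₀ : 0 ≤ e 0) (hstep : ∀ n, e (n + 2) ≤ θ * e (n + 1)) (n : ℕ) :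
    e n ≤ e 0 / θ * θ ^ n := by
  cases n with
  | zero => simpa using le_div_self he₀ hθ₀ hθ₁
  | succ n =>
    calc e (n + 1) ≤ θ ^ n * e 1 :=
          le_geom (u := fun n ↦ e (n + 1)) hθ₀.le n fun k _ ↦ hstep k
      _ ≤ θ ^ n * e 0 := by gcongr; exact he zero_le_one
      _ = e 0 / θ * θ ^ (n + 1) := by rw [pow_succ]; field_simp

lemma exists_le_geometric_of_rpow_le {e : ℕ → ℝ} {s A θ : ℝ} (he : ∀ n, 0 ≤ e n) (hs : 0 < s)
    (hθ : θ ∈ Set.Ioo 0 1) (h : ∀ n, e n ^ s ≤ A * θ ^ n) :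
    ∃ C > 0, ∃ q ∈ Set.Ioo (0 : ℝ) 1, ∀ n, e n ≤ C * q ^ n := by
  obtain ⟨hθ₀, hθ₁⟩ := hθ
  have hA : 0 ≤ A := by simpa using (Real.rpow_nonneg (he 0) s).trans (h 0)
  refine ⟨(A + 1) ^ s⁻¹, by positivity, θ ^ s⁻¹,
    ⟨by positivity, Real.rpow_lt_one hθ₀.le hθ₁ (by positivity)⟩, fun n ↦ ?_⟩
  calc e n ≤ ((A + 1) * θ ^ n) ^ s⁻¹ := by
        rw [Real.le_rpow_inv_iff_of_pos (he n) (by positivity) hs]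
        exact (h n).trans (by gcongr; linarith)
    _ = (A + 1) ^ s⁻¹ * (θ ^ s⁻¹) ^ n := by
        rw [Real.mul_rpow (by positivity) (by positivity), Real.rpow_pow_comm hθ₀.le]

lemma tendsto_of_norm_sub_le_geometric {E : Type*} [SeminormedAddCommGroup E] {x : ℕ → E}
    {l : E} {C q : ℝ} (hq₀ : 0 ≤ q) (hq₁ : q < 1) (h : ∀ n, ‖l - x n‖ ≤ C * q ^ n) :
    Tendsto x atTop (𝓝 l) := by
  refine tendsto_iff_norm_sub_tendsto_zero.2
    (squeeze_zero (fun _ ↦ norm_nonneg _) (fun n ↦ norm_sub_rev l (x n) ▸ h n) ?_)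
  simpa using (tendsto_pow_atTop_nhds_zero_of_lt_one hq₀ hq₁).const_mul C

section PowerConvex

lemma modConvex_le {E : Type*} [NormedAddCommGroup E] {ε : ℝ} {x y : E} (hx : ‖x‖ = 1)
    (hy : ‖y‖ = 1) (hε : ε ≤ ‖x - y‖) : modConvex E ε ≤ 1 - ‖x + y‖ / 2 := by
  refine csInf_le ⟨0, ?_⟩ ⟨x, y, hx, hy, hε, rfl⟩
  rintro _ ⟨u, v, hu, hv, -, rfl⟩
  linarith [norm_add_le u v]

lemma PowerConvex.mono {E : Type*} [NormedAddCommGroup E] {ρ ρ' : ℝ} (h : PowerConvex E ρ)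
    (hle : ρ ≤ ρ') (hρ' : ρ' ≠ 0) : PowerConvex E ρ' := by
  obtain ⟨c, hc, hmod⟩ := h
  refine ⟨c * 2 ^ ρ / 2 ^ ρ', by positivity, fun ε hε ↦ le_trans ?_ (hmod ε hε)⟩
  obtain rfl | hε₀ := hε.1.eq_or_lt
  · rw [Real.zero_rpow hρ', mul_zero]
    positivity
  have hpow : (ε / 2) ^ ρ' ≤ (ε / 2) ^ ρ :=
    Real.rpow_le_rpow_of_exponent_ge (by positivity) (by linarith [hε.2]) hle
  rw [Real.div_rpow hε.1 zero_le_two, Real.div_rpow hε.1 zero_le_two] at hpow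
  calc c * 2 ^ ρ / 2 ^ ρ' * ε ^ ρ' = c * 2 ^ ρ * (ε ^ ρ' / 2 ^ ρ') := by ring
    _ ≤ c * 2 ^ ρ * (ε ^ ρ / 2 ^ ρ) := by gcongr
    _ = c * ε ^ ρ := by field_simp

lemma PowerConvex.exists_norm_sub_rpow_le_of_norm_eq_one {E : Type*} [NormedAddCommGroup E]
    {ρ : ℝ} (h : PowerConvex E ρ) :
    ∃ C > 0, ∀ u v : E, ‖u‖ = 1 → ‖v‖ = 1 → ‖u - v‖ ^ ρ ≤ C * (1 - ‖u + v‖ / 2) := by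
  obtain ⟨c, hc, hmod⟩ := h
  refine ⟨c⁻¹, by positivity, fun u v hu hv ↦ ?_⟩
  have htwo : ‖u - v‖ ≤ 2 := by linarith [norm_sub_le u v]
  rw [le_inv_mul_iff₀ hc]
  exact (hmod _ ⟨norm_nonneg _, htwo⟩).trans (modConvex_le hu hv le_rfl)

variable {E : Type*} [NormedAddCommGroup E] [NormedSpace ℝ E] {ρ : ℝ}

lemma exists_norm_eq_one_norm_sub_eq [Nontrivial E] (x : E) :
    ∃ u : E, ‖u‖ = 1 ∧ ‖x - u‖ = |‖x‖ - 1| := by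
  obtain rfl | hx := eq_or_ne x 0
  · obtain ⟨u, hu⟩ := exists_norm_eq E zero_le_one
    exact ⟨u, hu, by simp [hu]⟩
  have hu : ‖NormedSpace.normalize x‖ = 1 := NormedSpace.norm_normalize_eq_one_iff.2 hx
  refine ⟨_, hu, ?_⟩
  calc ‖x - NormedSpace.normalize x‖ = ‖(‖x‖ - 1) • NormedSpace.normalize x‖ := by
        rw [sub_smul, one_smul, NormedSpace.norm_smul_normalize]
    _ = |‖x‖ - 1| := by rw [norm_smul, hu, mul_one, Real.norm_eq_abs]

lemma exists_norm_eq_one_norm_sub_le_norm_add_le [Nontrivial E] {u v : E} (hu : ‖u‖ ≤ 1)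
    (hv : ‖v‖ ≤ 1) : ∃ u' v' : E, ‖u'‖ = 1 ∧ ‖v'‖ = 1 ∧
      ‖u - v‖ ≤ ‖u' - v'‖ + (2 - ‖u + v‖) ∧ ‖u + v‖ ≤ ‖u' + v'‖ + (2 - ‖u + v‖) := by
  obtain ⟨u', hu', huu'⟩ := exists_norm_eq_one_norm_sub_eq u
  obtain ⟨v', hv', hvv'⟩ := exists_norm_eq_one_norm_sub_eq v
  have hclose : ‖u - u'‖ + ‖v - v'‖ ≤ 2 - ‖u + v‖ := by
    rw [huu', hvv', abs_of_nonpos (by linarith), abs_of_nonpos (by linarith)]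
    linarith [norm_add_le u v]
  refine ⟨u', v', hu', hv', ?_, ?_⟩
  · calc ‖u - v‖ = ‖(u' - v') + ((u - u') - (v - v'))‖ := by congr 1; abel
      _ ≤ ‖u' - v'‖ + (‖u - u'‖ + ‖v - v'‖) :=
          (norm_add_le _ _).trans (by gcongr; exact norm_sub_le _ _)
      _ ≤ ‖u' - v'‖ + (2 - ‖u + v‖) := by gcongr
  · calc ‖u + v‖ = ‖(u' + v') + ((u - u') + (v - v'))‖ := by congr 1; abel
      _ ≤ ‖u' + v'‖ + (‖u - u'‖ + ‖v - v'‖) :=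
          (norm_add_le _ _).trans (by gcongr; exact norm_add_le _ _)
      _ ≤ ‖u' + v'‖ + (2 - ‖u + v‖) := by gcongr

lemma PowerConvex.exists_norm_sub_rpow_le_of_norm_le_one (h : PowerConvex E ρ) (hρ : 1 ≤ ρ) :
    ∃ C > 0, ∀ u v : E, ‖u‖ ≤ 1 → ‖v‖ ≤ 1 → ‖u - v‖ ^ ρ ≤ C * (1 - ‖u + v‖ / 2) := by
  obtain ⟨C, hC, hsphere⟩ := h.exists_norm_sub_rpow_le_of_norm_eq_one
  refine ⟨2 ^ (ρ - 1) * (C * 2 + 2 ^ ρ), by positivity, fun u v hu hv ↦ ?_⟩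
  set t := 1 - ‖u + v‖ / 2 with ht
  have ht₀ : 0 ≤ t := by linarith [norm_add_le u v]
  have ht₁ : t ≤ 1 := by linarith [norm_nonneg (u + v)]
  obtain _ | _ := subsingleton_or_nontrivial E
  · rw [Subsingleton.elim u v, sub_self, norm_zero, Real.zero_rpow (by linarith)]
    positivity
  obtain ⟨u', v', hu', hv', hsub, hadd⟩ := exists_norm_eq_one_norm_sub_le_norm_add_le hu hv
  have htpow : (2 * t) ^ ρ ≤ 2 ^ ρ * t := by
    rw [Real.mul_rpow zero_le_two ht₀]
    gcongr
    exact Real.rpow_le_self_of_le_one ht₀ ht₁ hρ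
  calc ‖u - v‖ ^ ρ ≤ (‖u' - v'‖ + 2 * t) ^ ρ := by
        gcongr
        linarith
    _ ≤ 2 ^ (ρ - 1) * (‖u' - v'‖ ^ ρ + (2 * t) ^ ρ) := by
        exact mod_cast
          NNReal.rpow_add_le_mul_rpow_add_rpow ‖u' - v'‖₊ ⟨2 * t, by positivity⟩ hρ
    _ ≤ 2 ^ (ρ - 1) * (C * (2 * t) + 2 ^ ρ * t) := by
        gcongr
        exact (hsphere u' v' hu' hv').trans (by gcongr; linarith)
    _ = 2 ^ (ρ - 1) * (C * 2 + 2 ^ ρ) * t := by ring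

lemma PowerConvex.exists_norm_sub_rpow_le (h : PowerConvex E ρ) (hρ : 1 ≤ ρ) :
    ∃ C > 0, ∀ (r : ℝ) (u v : E), ‖u‖ ≤ r → ‖v‖ ≤ r →
      ‖u - v‖ ^ ρ ≤ C * r ^ (ρ - 1) * (r - ‖u + v‖ / 2) := by
  obtain ⟨C, hC, hball⟩ := h.exists_norm_sub_rpow_le_of_norm_le_one hρ
  refine ⟨C, hC, fun r u v hu hv ↦ ?_⟩
  obtain hr | hr := ((norm_nonneg u).trans hu).eq_or_lt
  · obtain rfl : u = 0 := norm_le_zero_iff.1 (hr ▸ hu)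
    obtain rfl : v = 0 := norm_le_zero_iff.1 (hr ▸ hv)
    simp [← hr, Real.zero_rpow (show ρ ≠ 0 by linarith)]
  have norm_scale (w : E) : ‖r⁻¹ • w‖ = ‖w‖ / r := by
    rw [norm_smul_of_nonneg (by positivity), inv_mul_eq_div]
  have hscaled := hball (r⁻¹ • u) (r⁻¹ • v) (by rw [norm_scale]; exact (div_le_one hr).2 hu)
    (by rw [norm_scale]; exact (div_le_one hr).2 hv)
  rw [← smul_sub, ← smul_add, norm_scale, norm_scale, Real.div_rpow (norm_nonneg _) hr.le,
    div_le_iff₀ (by positivity)] at hscaled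
  calc ‖u - v‖ ^ ρ ≤ C * (1 - ‖u + v‖ / r / 2) * r ^ ρ := hscaled
    _ = C * r ^ (ρ - 1) * (r - ‖u + v‖ / 2) := by
        rw [Real.rpow_sub_one hr.ne']
        field_simp

end PowerConvex

section NearestPoint

variable {E : Type*} [NormedAddCommGroup E] [NormedSpace ℝ E] {ρ : ℝ}

lemma two_mul_infDist_le_of_convex {E : Type*} [SeminormedAddCommGroup E] [NormedSpace ℝ E]
    {S : Set E} (hS : Convex ℝ S) (x : E) {y z : E} (hy : y ∈ S) (hz : z ∈ S) :
    2 * Metric.infDist x S ≤ ‖(x - y) + (x - z)‖ := by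
  calc 2 * Metric.infDist x S ≤ 2 * dist x (midpoint ℝ y z) := by
        gcongr
        exact Metric.infDist_le_dist_of_mem (hS.midpoint_mem hy hz)
    _ = ‖(x - y) + (x - z)‖ := by
        rw [dist_eq_norm, ← norm_smul_of_nonneg zero_le_two, midpoint_eq_smul_add,
          invOf_eq_inv]
        congr 1
        module

lemma PowerConvex.exists_norm_sub_rpow_le_infDist (h : PowerConvex E ρ) (hρ : 1 ≤ ρ) :
    ∃ C > 0, ∀ (S : Set E), Convex ℝ S → ∀ (x : E) (r : ℝ), ∀ y ∈ S, ∀ z ∈ S,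
      ‖x - y‖ ≤ r → ‖x - z‖ ≤ r →
        ‖y - z‖ ^ ρ ≤ C * r ^ (ρ - 1) * (r - Metric.infDist x S) := by
  obtain ⟨C, hC, hkey⟩ := h.exists_norm_sub_rpow_le hρ
  refine ⟨C, hC, fun S hS x r y hy z hz hxy hxz ↦ ?_⟩
  have hr : 0 ≤ r := (norm_nonneg _).trans hxy
  calc ‖y - z‖ ^ ρ = ‖(x - y) - (x - z)‖ ^ ρ := by rw [sub_sub_sub_cancel_left, norm_sub_rev]
    _ ≤ C * r ^ (ρ - 1) * (r - ‖(x - y) + (x - z)‖ / 2) := hkey r _ _ hxy hxz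
    _ ≤ C * r ^ (ρ - 1) * (r - Metric.infDist x S) := by
        gcongr
        linarith [two_mul_infDist_le_of_convex hS x hy hz]

theorem PowerConvex.exists_norm_sub_eq_infDist [CompleteSpace E] (h : PowerConvex E ρ)
    (hρ : 1 ≤ ρ) {S : Set E} (hS : IsClosed S) (hSc : Convex ℝ S) (hne : S.Nonempty) (x : E) :
    ∃ y ∈ S, ‖x - y‖ = Metric.infDist x S := by
  obtain ⟨C, hC, hkey⟩ := h.exists_norm_sub_rpow_le_infDist hρ
  set d := Metric.infDist x S
  obtain ⟨r, hr_anti, hr_gt, hr_lim⟩ := exists_seq_strictAnti_tendsto d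
  have near (n : ℕ) : ∃ y ∈ S, dist x y < r n := (Metric.infDist_lt_iff hne).1 (hr_gt n)
  choose y hyS hy using near
  have hy_le {n k : ℕ} (hkn : k ≤ n) : ‖x - y n‖ ≤ r k :=
    dist_eq_norm x (y n) ▸ (hy n).le.trans (hr_anti.antitone hkn)
  have hcauchy : CauchySeq y := by
    refine cauchySeq_of_le_tendsto_0 (fun k ↦ (C * r k ^ (ρ - 1) * (r k - d)) ^ ρ⁻¹)
      (fun n m k hkn hkm ↦ ?_) ?_
    · have hrk : 0 ≤ r k := (norm_nonneg _).trans (hy_le hkn)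
      have hd : 0 ≤ r k - d := sub_nonneg.2 (hr_gt k).le
      rw [dist_eq_norm,
        Real.le_rpow_inv_iff_of_pos (norm_nonneg _) (by positivity) (by linarith)]
      exact hkey S hSc x _ _ (hyS n) _ (hyS m) (hy_le hkn) (hy_le hkm)
    · have hlim := (((hr_lim.rpow_const (p := ρ - 1) (.inr (by linarith))).const_mul C).mul
        (hr_lim.sub_const d)).rpow_const (p := ρ⁻¹) (.inr (by positivity))
      rwa [sub_self, mul_zero, Real.zero_rpow (by positivity)] at hlim
  obtain ⟨z, hz⟩ := cauchySeq_tendsto_of_complete hcauchy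
  have hzS : z ∈ S := hS.mem_of_tendsto hz (.of_forall hyS)
  refine ⟨z, hzS, ?_⟩
  rw [← dist_eq_norm]
  exact le_antisymm
    (le_of_tendsto_of_tendsto' (tendsto_const_nhds.dist hz) hr_lim fun n ↦ (hy n).le)
    (Metric.infDist_le_dist_of_mem hzS)

lemma metricProj_mem_and_norm_sub_eq {E : Type*} [NormedAddCommGroup E] {S : Set E} {x : E}
    (h : ∃ y ∈ S, ‖x - y‖ = Metric.infDist x S) :
    metricProj S x ∈ S ∧ ‖x - metricProj S x‖ = Metric.infDist x S := by
  obtain ⟨y, hyS, hy⟩ := h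
  have hspec : metricProj S x ∈ S ∧ ∀ m ∈ S, ‖x - metricProj S x‖ ≤ ‖x - m‖ :=
    Classical.epsilon_spec (p := fun y ↦ y ∈ S ∧ ∀ m ∈ S, ‖x - y‖ ≤ ‖x - m‖)
      ⟨y, hyS, fun m hm ↦ by
        rw [hy, ← dist_eq_norm]; exact Metric.infDist_le_dist_of_mem hm⟩
  refine ⟨hspec.1, le_antisymm (hy ▸ hspec.2 y hyS) ?_⟩
  rw [← dist_eq_norm]
  exact Metric.infDist_le_dist_of_mem hspec.1

end NearestPoint

section MetricResidual

variable {R E : Type*} [Ring R] [SeminormedAddCommGroup E] [Module R E]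

lemma infDist_eq_of_sub_mem {L : AddSubgroup E} {x y : E} (h : x - y ∈ L) :
    Metric.infDist x L = Metric.infDist y L := by
  rw [← QuotientAddGroup.norm_mk, ← QuotientAddGroup.norm_mk,
    QuotientAddGroup.eq_iff_sub_mem.2 h]

/-- `r` is a residual of best approximation of `x` from `L`: it is `x - y` for some point `y` of
`L` nearest to `x`. This is the relational form of `r = (I - P_L) x`, meaningful without any
uniqueness or existence of nearest points. -/
structure IsMetricResidual (L : Submodule R E) (x r : E) : Prop where
  sub_mem : x - r ∈ L
  norm_eq : ‖r‖ = Metric.infDist x L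

namespace IsMetricResidual

variable {L : Submodule R E} {x r : E}

lemma norm_le (h : IsMetricResidual L x r) : ‖r‖ ≤ ‖x‖ := by
  simpa [h.norm_eq] using Metric.infDist_le_dist_of_mem (x := x) L.zero_mem

lemma infDist_eq (h : IsMetricResidual L x r) : Metric.infDist r (L : Set E) = ‖r‖ :=
  h.norm_eq ▸ (infDist_eq_of_sub_mem (L := L.toAddSubgroup) h.sub_mem).symm

end IsMetricResidual

/-- `x` is a sequence of residuals of best approximation taken alternately from `M` and from `N`,
starting with `M`. -/
structure IsAlternatingResidual (M N : Submodule R E) (x : ℕ → E) : Prop where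
  fst (n : ℕ) : IsMetricResidual M (x (2 * n)) (x (2 * n + 1))
  snd (n : ℕ) : IsMetricResidual N (x (2 * n + 1)) (x (2 * n + 2))

namespace IsAlternatingResidual

variable {M N : Submodule R E} {x : ℕ → E}

lemma tail (h : IsAlternatingResidual M N x) : IsAlternatingResidual N M (fun n ↦ x (n + 1)) :=
  ⟨h.snd, fun n ↦ h.fst (n + 1)⟩

lemma isMetricResidual_or (h : IsAlternatingResidual M N x) (n : ℕ) :
    IsMetricResidual M (x n) (x (n + 1)) ∨ IsMetricResidual N (x n) (x (n + 1)) := by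
  obtain ⟨k, rfl | rfl⟩ := Nat.even_or_odd' n
  exacts [.inl (h.fst k), .inr (h.snd k)]

lemma antitone_norm (h : IsAlternatingResidual M N x) : Antitone fun n ↦ ‖x n‖ :=
  antitone_nat_of_succ_le fun n ↦ (h.isMetricResidual_or n).elim (·.norm_le) (·.norm_le)

lemma sub_mem_sup (h : IsAlternatingResidual M N x) (n : ℕ) : x 0 - x n ∈ M ⊔ N := by
  induction n with
  | zero => simp
  | succ n ih =>
    have hstep : x n - x (n + 1) ∈ M ⊔ N := (h.isMetricResidual_or n).elim
      (fun hM ↦ Submodule.mem_sup_left hM.sub_mem) (fun hN ↦ Submodule.mem_sup_right hN.sub_mem)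
    simpa using add_mem ih hstep

lemma infDist_sup_eq (h : IsAlternatingResidual M N x) (n : ℕ) :
    Metric.infDist (x n) ((M ⊔ N : Submodule R E) : Set E) =
      Metric.infDist (x 0) ((M ⊔ N : Submodule R E) : Set E) :=
  (infDist_eq_of_sub_mem (L := (M ⊔ N).toAddSubgroup) (h.sub_mem_sup n)).symm

lemma infDist_sup_le_norm (h : IsAlternatingResidual M N x) (n : ℕ) :
    Metric.infDist (x 0) ((M ⊔ N : Submodule R E) : Set E) ≤ ‖x n‖ := by
  simpa [h.infDist_sup_eq n] using
    Metric.infDist_le_dist_of_mem (x := x n) (M ⊔ N).zero_mem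

lemma min_infDist_eq (h : IsAlternatingResidual M N x) (n : ℕ) :
    min (Metric.infDist (x (n + 1)) (M : Set E)) (Metric.infDist (x (n + 1)) (N : Set E)) =
      ‖x (n + 2)‖ := by
  induction n generalizing M N x with
  | zero =>
    rw [(h.fst 0).infDist_eq, ← (h.snd 0).norm_eq]
    exact min_eq_right (h.snd 0).norm_le
  | succ n ih => exact min_comm (Metric.infDist _ (M : Set E)) _ ▸ ih h.tail

theorem exists_rpow_norm_sub_rpow_infDist_le_geometric (h : IsAlternatingResidual M N x)
    {p κ : ℝ} (hp : 0 ≤ p) (hκ : 1 ≤ κ)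
    (hcond : ∀ y ∈ Metric.closedBall (0 : E) ‖x 0‖,
      min (Metric.infDist y (M : Set E) ^ p) (Metric.infDist y (N : Set E) ^ p) ≤
        (κ - 1) / κ * ‖y‖ ^ p +
          1 / κ * Metric.infDist y ((M ⊔ N : Submodule R E) : Set E) ^ p) :
    ∃ θ ∈ Set.Ioo (0 : ℝ) 1, ∃ B, ∀ n,
      ‖x n‖ ^ p - Metric.infDist (x 0) ((M ⊔ N : Submodule R E) : Set E) ^ p ≤ B * θ ^ n := by
  set d := Metric.infDist (x 0) ((M ⊔ N : Submodule R E) : Set E)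
  have hd₀ : 0 ≤ d := Metric.infDist_nonneg
  have hκ₀ : 0 < κ := by linarith
  let excess (n : ℕ) : ℝ := ‖x n‖ ^ p - d ^ p
  have excess_nonneg (n : ℕ) : 0 ≤ excess n :=
    sub_nonneg.2 (Real.rpow_le_rpow hd₀ (h.infDist_sup_le_norm n) hp)
  have excess_anti : Antitone excess := fun m n hmn ↦
    sub_le_sub_right (Real.rpow_le_rpow (norm_nonneg _) (h.antitone_norm hmn) hp) _
  -- The rate `(κ - 1) / κ` is relaxed to `κ / (κ + 1)`, which stays positive when `κ = 1`.
  have excess_step (n : ℕ) : excess (n + 2) ≤ κ / (κ + 1) * excess (n + 1) := by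
    have hn := hcond (x (n + 1)) (by simpa using h.antitone_norm (Nat.zero_le (n + 1)))
    rw [← (Real.monotoneOn_rpow_Ici_of_exponent_nonneg hp).map_min Metric.infDist_nonneg
      Metric.infDist_nonneg, h.min_infDist_eq, h.infDist_sup_eq] at hn
    calc excess (n + 2) ≤ (κ - 1) / κ * ‖x (n + 1)‖ ^ p + 1 / κ * d ^ p - d ^ p :=
          sub_le_sub_right hn _
      _ = (κ - 1) / κ * excess (n + 1) := by simp only [excess]; field_simp; ring
      _ ≤ κ / (κ + 1) * excess (n + 1) := by
          refine mul_le_mul_of_nonneg_right ?_ (excess_nonneg _)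
          rw [div_le_div_iff₀ hκ₀ (by linarith)]
          linarith
  have hθ₁ : κ / (κ + 1) < 1 := (div_lt_one (by linarith)).2 (by linarith)
  exact ⟨κ / (κ + 1), ⟨by positivity, hθ₁⟩, excess 0 / (κ / (κ + 1)),
    le_div_mul_pow_of_antitone (by positivity) hθ₁.le excess_anti (excess_nonneg 0) excess_step⟩

end IsAlternatingResidual

end MetricResidual

section Convergence

variable {E : Type*} [NormedAddCommGroup E] [NormedSpace ℝ E] {ρ : ℝ}

lemma PowerConvex.isMetricResidual_sub_metricProj [CompleteSpace E] (h : PowerConvex E ρ)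
    (hρ : 1 ≤ ρ) {L : Submodule ℝ E} (hL : IsClosed (L : Set E)) (x : E) :
    IsMetricResidual L x (x - metricProj (L : Set E) x) := by
  obtain ⟨hmem, hnorm⟩ := metricProj_mem_and_norm_sub_eq
    (h.exists_norm_sub_eq_infDist hρ hL L.convex ⟨0, L.zero_mem⟩ x)
  exact ⟨by simpa using hmem, hnorm⟩

theorem PowerConvex.exists_norm_sub_le_geometric (h : PowerConvex E ρ) {p κ : ℝ} (hp : 1 ≤ p)
    (hpρ : p ≤ ρ) (hκ : 1 ≤ κ) {M N : Submodule ℝ E} {x : ℕ → E} {b : E}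
    (hx : IsAlternatingResidual M N x) (hb : IsMetricResidual (M ⊔ N) (x 0) b)
    (hcond : ∀ y ∈ Metric.closedBall (0 : E) ‖x 0‖,
      min (Metric.infDist y (M : Set E) ^ p) (Metric.infDist y (N : Set E) ^ p) ≤
        (κ - 1) / κ * ‖y‖ ^ p +
          1 / κ * Metric.infDist y ((M ⊔ N : Submodule ℝ E) : Set E) ^ p) :
    ∃ C > 0, ∃ q ∈ Set.Ioo (0 : ℝ) 1, ∀ n, ‖b - x n‖ ≤ C * q ^ n := by
  obtain ⟨C, hC, hkey⟩ := h.exists_norm_sub_rpow_le_infDist (hp.trans hpρ)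
  obtain ⟨θ, hθ, B, hB⟩ := hx.exists_rpow_norm_sub_rpow_infDist_le_geometric (by linarith) hκ hcond
  refine exists_le_geometric_of_rpow_le (s := ρ) (A := C * ‖x 0‖ ^ (ρ - p) * B)
    (fun n ↦ norm_nonneg _) (by linarith) hθ fun n ↦ ?_
  set d := Metric.infDist (x 0) ((M ⊔ N : Submodule ℝ E) : Set E)
  have hdn : d ≤ ‖x n‖ := hx.infDist_sup_le_norm n
  calc ‖b - x n‖ ^ ρ = ‖(x 0 - x n) - (x 0 - b)‖ ^ ρ := by rw [sub_sub_sub_cancel_left]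
    _ ≤ C * ‖x n‖ ^ (ρ - 1) * (‖x n‖ - d) :=
        hkey _ (M ⊔ N).convex (x 0) ‖x n‖ _ (hx.sub_mem_sup n) _ hb.sub_mem
          (by rw [sub_sub_cancel]) (by rwa [sub_sub_cancel, hb.norm_eq])
    _ = C * (‖x n‖ ^ (ρ - 1) * (‖x n‖ - d)) := by ring
    _ ≤ C * (‖x 0‖ ^ (ρ - p) * (‖x n‖ ^ p - d ^ p)) := by
        refine mul_le_mul_of_nonneg_left ?_ hC.le
        exact rpow_sub_one_mul_sub_le hp hpρ Metric.infDist_nonneg hdn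
          (hx.antitone_norm (Nat.zero_le n))
    _ ≤ C * (‖x 0‖ ^ (ρ - p) * (B * θ ^ n)) := by gcongr; exact hB n
    _ = C * ‖x 0‖ ^ (ρ - p) * B * θ ^ n := by ring

end Convergence

theorem statement17_general {E : Type*} [NormedAddCommGroup E] [NormedSpace ℝ E]
    [CompleteSpace E] {ρ p : ℝ} (hconv : PowerConvex E ρ) (hp : 1 ≤ p) {M N : Submodule ℝ E}
    (hM : IsClosed (M : Set E)) (hN : IsClosed (N : Set E))
    (hMN : IsClosed ((M ⊔ N : Submodule ℝ E) : Set E)) {x : ℕ → E}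
    (hcond : ∃ κ ≥ (1 : ℝ), ∀ y ∈ Metric.closedBall (0 : E) ‖x 0‖,
      min (Metric.infDist y (M : Set E) ^ p) (Metric.infDist y (N : Set E) ^ p) ≤
        (κ - 1) / κ * ‖y‖ ^ p +
          1 / κ * Metric.infDist y ((M ⊔ N : Submodule ℝ E) : Set E) ^ p)
    (hodd : ∀ n, x (2 * n + 1) = x (2 * n) - metricProj (M : Set E) (x (2 * n)))
    (heven : ∀ n, x (2 * n + 2) = x (2 * n + 1) - metricProj (N : Set E) (x (2 * n + 1))) :
    Tendsto x atTop (𝓝 (x 0 - metricProj ((M ⊔ N : Submodule ℝ E) : Set E) (x 0))) ∧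
    ∃ C > (0 : ℝ), ∃ q ∈ Set.Ioo (0 : ℝ) 1, ∀ n : ℕ,
      ‖(x 0 - metricProj ((M ⊔ N : Submodule ℝ E) : Set E) (x 0)) - x n‖ ≤ C * q ^ n := by
  obtain ⟨κ, hκ, hcond⟩ := hcond
  -- Raising the exponent of convexity is harmless and makes it dominate `p`.
  have hmax : 1 ≤ max ρ p := hp.trans (le_max_right ρ p)
  have hconv' : PowerConvex E (max ρ p) := hconv.mono (le_max_left ρ p) (by linarith)
  have hx : IsAlternatingResidual M N x :=
    ⟨fun n ↦ hodd n ▸ hconv'.isMetricResidual_sub_metricProj hmax hM _,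
      fun n ↦ heven n ▸ hconv'.isMetricResidual_sub_metricProj hmax hN _⟩
  obtain ⟨C, hC, q, hq, hbound⟩ := hconv'.exists_norm_sub_le_geometric hp (le_max_right ρ p) hκ hx
    (hconv'.isMetricResidual_sub_metricProj hmax hMN _) hcond
  exact ⟨tendsto_of_norm_sub_le_geometric hq.1.le hq.2 hbound, C, hC, q, hq, hbound⟩

theorem statement17 {X : Type*} [NormedAddCommGroup X] [NormedSpace ℝ X] [CompleteSpace X]
    (ρ σ p pstar : ℝ) (hconv : PowerConvex X ρ) (hsmooth : PowerSmooth X σ)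
    (hp : 1 < p) (hconj : 1 / p + 1 / pstar = 1)
    (hσp : σ ≤ p) (hpρ : p ≤ ρ) (hσps : σ ≤ pstar) (hpsρ : pstar ≤ ρ)
    (M N : Submodule ℝ X) (hM : IsClosed (M : Set X)) (hN : IsClosed (N : Set X))
    (hMN : IsClosed ((M ⊔ N : Submodule ℝ X) : Set X))
    (hcond : ∀ S : Set X, Bornology.IsBounded S → ∃ κ ≥ (1 : ℝ), ∀ x ∈ S,
      min (Metric.infDist x (M : Set X) ^ p) (Metric.infDist x (N : Set X) ^ p) ≤
        (κ - 1) / κ * ‖x‖ ^ p +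
          1 / κ * Metric.infDist x ((M ⊔ N : Submodule ℝ X) : Set X) ^ p)
    (a : X) (x : ℕ → X) (hx0 : x 0 = a)
    (hodd : ∀ n : ℕ, x (2 * n + 1) = x (2 * n) - metricProj (M : Set X) (x (2 * n)))
    (heven : ∀ n : ℕ, x (2 * n + 2) = x (2 * n + 1) - metricProj (N : Set X) (x (2 * n + 1))) :
    Filter.Tendsto x Filter.atTop
      (𝓝 (a - metricProj ((M ⊔ N : Submodule ℝ X) : Set X) a)) ∧
    ∃ C > (0 : ℝ), ∃ q ∈ Set.Ioo (0 : ℝ) 1, ∀ n : ℕ,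
      ‖(a - metricProj ((M ⊔ N : Submodule ℝ X) : Set X) a) - x n‖ ≤ C * q ^ n := by
  subst hx0
  exact statement17_general hconv hp.le hM hN hMN (hcond _ Metric.isBounded_closedBall) hodd heven
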